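/- Orthogonality of complex Hermite polynomials: let Z be a complex Gaussian random variable with parameter ρ > 0. Then for all m, n, p, q ∈ ℕ, E[J_{m,n}(Z,ρ) · conj(J_{p,q}(Z,ρ))] = 0 unless m = p and n = q, and E[|J_{m,n}(Z,ρ)|²] = m! · n! · ρ^{m+n}. -/

import Mathlib

open MeasureTheory ProbabilityTheory Complex Finset

/-- Itô's complex Hermite polynomial `J_{m,n}(z, ρ)`. -/
noncomputable def complexHermite (m n : ℕ) (z : ℂ) (ρ : ℝ) : ℂ :=
  ∑ k ∈ Finset.range (min m n + 1),
    (-1 : ℂ) ^ k * (Nat.factorial k : ℂ) * (Nat.choose m k : ℂ) * (Nat.choose n k : ℂ) *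
      (ρ : ℂ) ^ k * z ^ (m - k) * (starRingEnd ℂ z) ^ (n - k)

/-- Law of a complex Gaussian variable with parameter `ρ`: the law of `Z = X + iY` where
`X, Y` are independent real centered Gaussian variables of mean `0` and variance `ρ/2`. -/
noncomputable def complexGaussian (ρ : ℝ) : Measure ℂ :=
  ((gaussianReal 0 (ρ/2).toNNReal).prod (gaussianReal 0 (ρ/2).toNNReal)).map
    (fun p => (p.1 : ℂ) + (p.2 : ℂ) * Complex.I)



/-! ### Real Gaussian moments -/

lemma gauss_integrable_pow (v : NNReal) (k : ℕ) :
    Integrable (fun x : ℝ => x ^ k) (gaussianReal 0 v) := by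
  have h := (memLp_id_gaussianReal (μ := 0) (v := v) (k : NNReal)).integrable_norm_pow'
  rw [← integrable_norm_iff (by fun_prop)]
  simpa using h

lemma gauss_density_integrable {v : NNReal} (hv : v ≠ 0) (k : ℕ) :
    Integrable (fun x : ℝ => x ^ k * gaussianPDFReal 0 v x) := by
  have h := gauss_integrable_pow v k
  rw [gaussianReal_of_var_ne_zero 0 hv,
    integrable_withDensity_iff (measurable_gaussianPDF 0 v)
      (Filter.Eventually.of_forall fun x => gaussianPDF_lt_top)] at h
  simpa [toReal_gaussianPDF] using h

lemma gauss_moment {v : NNReal} (hv : v ≠ 0) (k : ℕ) :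
    ∫ x, x ^ (k + 1) ∂(gaussianReal 0 v) = v * (k * ∫ x, x ^ (k - 1) ∂(gaussianReal 0 v)) := by
  have hv' : (v : ℝ) ≠ 0 := by exact_mod_cast hv
  have hd : ∀ x : ℝ, HasDerivAt (fun x : ℝ => x ^ k * gaussianPDFReal 0 v x)
      (k * (x ^ (k - 1) * gaussianPDFReal 0 v x)
        - (v : ℝ)⁻¹ * (x ^ (k + 1) * gaussianPDFReal 0 v x)) x := by
    intro x
    have h1 : HasDerivAt (gaussianPDFReal 0 v) (-(x / v) * gaussianPDFReal 0 v x) x := by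
      have h2 : HasDerivAt (fun x : ℝ => -(x - 0) ^ 2 / (2 * (v : ℝ))) (-(x / v)) x := by
        have := (((hasDerivAt_id x).sub_const 0).pow 2).neg.div_const (2 * (v : ℝ))
        refine this.congr_deriv ?_
        simp
        field_simp
      have := h2.exp.const_mul ((√(2 * Real.pi * v))⁻¹)
      rw [gaussianPDFReal_def]
      refine this.congr_deriv ?_
      simp only []
      ring
    refine ((hasDerivAt_pow k x).mul h1).congr_deriv ?_
    rw [div_eq_mul_inv]
    ring
  have hI := integral_eq_zero_of_hasDerivAt_of_integrable hd
    (((gauss_density_integrable hv _).const_mul _).sub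
      ((gauss_density_integrable hv _).const_mul _)) (gauss_density_integrable hv k)
  rw [integral_sub ((gauss_density_integrable hv _).const_mul _)
      ((gauss_density_integrable hv _).const_mul _), integral_const_mul, integral_const_mul] at hI
  rw [integral_gaussianReal_eq_integral_smul hv, integral_gaussianReal_eq_integral_smul hv]
  simp only [smul_eq_mul, mul_comm (gaussianPDFReal 0 v _)]
  have h3 := sub_eq_zero.1 hI
  rw [h3, mul_inv_cancel_left₀ hv']

/-! ### The abstract algebra -/

section Algebra

variable {R : Type*} [CommRing R]

/-- Complex Hermite polynomial in a commutative ring. -/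
def hermJ (r z w : R) (m n : ℕ) : R :=
  ∑ k ∈ Finset.range (m + 1), (-1 : R) ^ k * (Nat.factorial k : R) * (Nat.choose m k : R) *
    (Nat.choose n k : R) * r ^ k * z ^ (m - k) * w ^ (n - k)

lemma hermJ_eq_sum (r z w : R) (m n N : ℕ) (h : min m n + 1 ≤ N) :
    hermJ r z w m n = ∑ k ∈ Finset.range N, (-1 : R) ^ k * (Nat.factorial k : R) *
      (Nat.choose m k : R) * (Nat.choose n k : R) * r ^ k * z ^ (m - k) * w ^ (n - k) := by
  have key : ∀ M, min m n + 1 ≤ M → ∑ k ∈ Finset.range (min m n + 1),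
      (-1 : R) ^ k * (Nat.factorial k : R) *
      (Nat.choose m k : R) * (Nat.choose n k : R) * r ^ k * z ^ (m - k) * w ^ (n - k) =
      ∑ k ∈ Finset.range M, (-1 : R) ^ k * (Nat.factorial k : R) *
      (Nat.choose m k : R) * (Nat.choose n k : R) * r ^ k * z ^ (m - k) * w ^ (n - k) := by
    intro M hM
    refine Finset.sum_subset (Finset.range_mono hM) fun k _ hk => ?_
    rw [Finset.mem_range, not_lt] at hk
    rcases le_total m n with h | h
    · rw [Nat.choose_eq_zero_of_lt (show m < k by omega)]; simp
    · rw [Nat.choose_eq_zero_of_lt (show n < k by omega)]; simp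
  rw [← key N h, key (m + 1) (by omega)]
  rfl

lemma hermJ_symm (r z w : R) (m n : ℕ) : hermJ r z w m n = hermJ r w z n m := by
  rw [hermJ_eq_sum r z w m n (m + n + 1) (by omega), hermJ_eq_sum r w z n m (m + n + 1) (by omega)]
  refine Finset.sum_congr rfl fun k _ => by ring

lemma hermJ_zero (r z w : R) : hermJ r z w 0 0 = 1 := by simp [hermJ]

lemma hermJ_succ (r z w : R) (m n : ℕ) :
    hermJ r z w (m + 1) n = z * hermJ r z w m n - r * (n * hermJ r z w m (n - 1)) := by
  rw [hermJ_eq_sum r z w (m + 1) n (m + 2) (by omega), hermJ_eq_sum r z w m n (m + 2) (by omega),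
    hermJ, Finset.mul_sum, Finset.mul_sum, Finset.mul_sum, Finset.sum_range_succ',
    Finset.sum_range_succ' _ (m + 1), add_sub_right_comm, ← Finset.sum_sub_distrib]
  congr 1
  · refine Finset.sum_congr rfl fun k hk => ?_
    have hk' : k ≤ m := by simpa [Nat.lt_succ_iff] using hk
    have e1 : ((n.choose (k + 1) : ℕ) : R) * ((k : R) + 1) = n * ((n - 1).choose k : ℕ) := by
      rcases n with _ | n
      · simp
      · have := Nat.add_one_mul_choose_eq n k
        simp only [Nat.add_sub_cancel]
        exact_mod_cast congrArg (Nat.cast : ℕ → R) this.symm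
    have e2 : n - (k + 1) = n - 1 - k := by omega
    have e3 : ((m.choose (k + 1) : ℕ) : R) * z ^ (m - k) =
        (m.choose (k + 1) : ℕ) * (z * z ^ (m - (k + 1))) := by
      rcases hk'.lt_or_eq with h | h
      · rw [← pow_succ']; congr 2; omega
      · subst h; simp
    rw [Nat.choose_succ_succ, Nat.factorial_succ, e2, Nat.add_sub_add_right]
    push_cast
    linear_combination ((-1) ^ (k + 1) * (k + 1) * (k.factorial : R) * (n.choose (k + 1) : R)
      * r ^ (k + 1) * w ^ (n - 1 - k)) * e3 + ((-1) ^ (k + 1) * (k.factorial : R) *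
      (m.choose k : R) * r ^ (k + 1) * z ^ (m - k) * w ^ (n - 1 - k)) * e1
  · simp [pow_succ']; ring

lemma hermJ_map {S : Type*} [CommRing S] (f : R →+* S) (r z w : R) (m n : ℕ) :
    f (hermJ r z w m n) = hermJ (f r) (f z) (f w) m n := by
  simp [hermJ]

variable [Algebra ℂ R]

lemma hermJ_deriv (D : Derivation ℂ R R) (r z w : R) (hr : D r = 0) (hz : D z = 0) (hw : D w = 1)
    (m n : ℕ) : D (hermJ r z w m n) = n * hermJ r z w m (n - 1) := by
  rw [hermJ, hermJ, map_sum, Finset.mul_sum]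
  refine Finset.sum_congr rfl fun k _ => ?_
  have h1 : D ((-1 : R) ^ k * (Nat.factorial k : R) * (Nat.choose m k : R) *
    (Nat.choose n k : R) * r ^ k * z ^ (m - k)) = 0 := by
    simp [Derivation.leibniz, Derivation.leibniz_pow, hr, hz]
  have e1 : ((n.choose k : ℕ) : R) * ((n - k : ℕ) : R) = n * ((n - 1).choose k : ℕ) := by
    rcases n with _ | n
    · simp
    · have := Nat.choose_mul_succ_eq n k
      simp only [Nat.add_sub_cancel]
      rw [mul_comm ((n + 1 : ℕ) : R)]
      exact_mod_cast congrArg (Nat.cast : ℕ → R) this.symm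
  have e2 : n - k - 1 = n - 1 - k := by omega
  rw [Derivation.leibniz, h1, Derivation.leibniz_pow, hw, e2]
  simp only [smul_eq_mul, nsmul_eq_mul, mul_one, mul_zero, add_zero]
  linear_combination ((-1 : R) ^ k * (Nat.factorial k : R) * (Nat.choose m k : R) *
    r ^ k * z ^ (m - k) * w ^ (n - 1 - k)) * e1

lemma herm_step (E : R →ₗ[ℂ] ℂ) (D : Derivation ℂ R R) (ρ : ℂ) (z w : R)
    (hz : D z = 0) (hw : D w = 1)
    (hE : ∀ g, E (z * g) = ρ * E (D g)) (m n : ℕ) (g : R) :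
    E (hermJ (algebraMap ℂ R ρ) z w (m + 1) n * g)
      = ρ * E (hermJ (algebraMap ℂ R ρ) z w m n * D g) := by
  rw [hermJ_succ, sub_mul, mul_assoc, map_sub, hE, Derivation.leibniz,
    hermJ_deriv D _ z w (by simp) hz hw, mul_assoc, ← Algebra.smul_def, map_smul]
  simp only [smul_eq_mul, map_add]
  rw [mul_comm g]
  ring

lemma herm_orth (E : R →ₗ[ℂ] ℂ) (D D' : Derivation ℂ R R) (ρ : ℂ) (z w : R)
    (hz : D z = 0) (hw : D w = 1) (hz' : D' z = 1) (hw' : D' w = 0) (h1 : E 1 = 1)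
    (hE : ∀ g, E (z * g) = ρ * E (D g)) (hE' : ∀ g, E (w * g) = ρ * E (D' g)) (m n p q : ℕ) :
    E (hermJ (algebraMap ℂ R ρ) z w m n * hermJ (algebraMap ℂ R ρ) z w q p) =
      if m = p ∧ n = q then (m.factorial : ℂ) * n.factorial * ρ ^ (m + n) else 0 := by
  have step := herm_step E D ρ z w hz hw hE
  have step' : ∀ (m n : ℕ) (g : R), E (hermJ (algebraMap ℂ R ρ) z w m (n + 1) * g)
      = ρ * E (hermJ (algebraMap ℂ R ρ) z w m n * D' g) := by
    intro m n g
    rw [hermJ_symm, hermJ_symm _ z w m n]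
    exact herm_step E D' ρ w z hw' hz' hE' n m g
  have d := hermJ_deriv D (algebraMap ℂ R ρ) z w (by simp) hz hw
  have d' : ∀ q p, D' (hermJ (algebraMap ℂ R ρ) z w q p) =
      q * hermJ (algebraMap ℂ R ρ) z w (q - 1) p := by
    intro q p
    rw [hermJ_symm, hermJ_symm _ z w (q - 1) p]
    exact hermJ_deriv D' (algebraMap ℂ R ρ) w z (by simp) hw' hz' p q
  have cst : ∀ (c : ℕ) (a b : R), E (a * (c * b)) = c * E (a * b) := by
    intro c a b
    have : a * (c * b) = (c : ℂ) • (a * b) := by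
      rw [Algebra.smul_def]; simp; ring
    rw [this, map_smul, smul_eq_mul]
  induction m generalizing p with
  | succ m ih =>
    rw [step, d, cst, ih]
    rcases p with _ | p
    · simp
    · simp only [Nat.add_sub_cancel, add_left_inj]
      split_ifs with h
      · obtain ⟨rfl, rfl⟩ := h
        rw [Nat.factorial_succ]; push_cast; ring
      · simp
  | zero =>
    induction n generalizing q with
    | succ n ih =>
      rw [step', d', cst, ih]
      rcases q with _ | q
      · simp
      · simp only [Nat.add_sub_cancel, add_left_inj]
        split_ifs with h
        · obtain ⟨rfl, rfl⟩ := h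
          rw [Nat.factorial_succ]; push_cast; ring
        · simp
    | zero =>
      rw [hermJ_zero, mul_comm]
      rcases q with _ | q
      · rcases p with _ | p
        · simp [hermJ_zero, h1]
        · rw [step']; simp
      · rw [step]; simp

end Algebra

/-! ### Expectation functional on polynomials in two variables -/

/-- Product of two real Gaussians. -/
noncomputable def gaussTwo (v : NNReal) : Measure (ℝ × ℝ) :=
  (gaussianReal 0 v).prod (gaussianReal 0 v)

/-- Evaluation point. -/
noncomputable def evalPt (x : ℝ × ℝ) : Fin 2 → ℂ := ![(x.1 : ℂ), (x.2 : ℂ)]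

lemma eval_monomial_pt (x : ℝ × ℝ) (u : Fin 2 →₀ ℕ) (a : ℂ) :
    MvPolynomial.eval (evalPt x) (MvPolynomial.monomial u a)
      = a * (((x.1 ^ u 0 : ℝ) : ℂ) * ((x.2 ^ u 1 : ℝ) : ℂ)) := by
  rw [MvPolynomial.eval_monomial, Finsupp.prod_fintype _ _ (by simp)]
  simp [evalPt]

lemma eval_integrable (v : NNReal) (p : MvPolynomial (Fin 2) ℂ) :
    Integrable (fun x => MvPolynomial.eval (evalPt x) p) (gaussTwo v) := by
  induction p using MvPolynomial.induction_on' with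
  | monomial u a =>
    simp only [eval_monomial_pt]
    exact ((gauss_integrable_pow v (u 0)).ofReal.mul_prod
      (gauss_integrable_pow v (u 1)).ofReal).const_mul a
  | add p q hp hq =>
    simp only [map_add]
    exact hp.add hq

/-- The expectation functional. -/
noncomputable def gaussE (v : NNReal) : MvPolynomial (Fin 2) ℂ →ₗ[ℂ] ℂ where
  toFun p := ∫ x, MvPolynomial.eval (evalPt x) p ∂(gaussTwo v)
  map_add' p q := by
    simp only [map_add]
    exact integral_add (eval_integrable v p) (eval_integrable v q)
  map_smul' c p := by
    simp only [MvPolynomial.smul_eval, RingHom.id_apply, smul_eq_mul]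
    exact integral_const_mul _ _

lemma gaussE_monomial (v : NNReal) (u : Fin 2 →₀ ℕ) (a : ℂ) :
    gaussE v (MvPolynomial.monomial u a) = a * (((∫ x, x ^ u 0 ∂(gaussianReal 0 v) : ℝ) : ℂ) *
      ((∫ x, x ^ u 1 ∂(gaussianReal 0 v) : ℝ) : ℂ)) := by
  change ∫ x, MvPolynomial.eval (evalPt x) (MvPolynomial.monomial u a) ∂(gaussTwo v) = _
  simp only [eval_monomial_pt]
  rw [integral_const_mul, gaussTwo,
    integral_prod_mul (fun x : ℝ => ((x ^ u 0 : ℝ) : ℂ)) (fun x : ℝ => ((x ^ u 1 : ℝ) : ℂ)),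
    integral_complex_ofReal, integral_complex_ofReal]

lemma gaussE_stein {v : NNReal} (hv : v ≠ 0) (i : Fin 2) (p : MvPolynomial (Fin 2) ℂ) :
    gaussE v (MvPolynomial.X i * p) = (v : ℂ) * gaussE v (MvPolynomial.pderiv i p) := by
  induction p using MvPolynomial.induction_on' with
  | monomial u a =>
    rw [MvPolynomial.X, MvPolynomial.monomial_mul, MvPolynomial.pderiv_monomial, gaussE_monomial,
      gaussE_monomial]
    fin_cases i
    · simp only [Fin.zero_eta, Finsupp.coe_add, Finsupp.coe_tsub, Pi.add_apply, Pi.sub_apply,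
        Finsupp.single_eq_same]
      have : (Finsupp.single (0 : Fin 2) 1) 1 = 0 := by simp
      rw [this, add_comm, gauss_moment hv]
      simp
      ring
    · simp only [Fin.mk_one, Finsupp.coe_add, Finsupp.coe_tsub, Pi.add_apply, Pi.sub_apply,
        Finsupp.single_eq_same]
      have : (Finsupp.single (1 : Fin 2) 1) 0 = 0 := by simp
      rw [this, add_comm 1, gauss_moment hv]
      simp
      ring
  | add p q hp hq => rw [mul_add, map_add, hp, hq, map_add, map_add, mul_add]

lemma gaussE_orth {ρ : ℝ} (hρ : 0 < ρ) (m n p q : ℕ) :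
    gaussE (ρ / 2).toNNReal
      (hermJ (algebraMap ℂ _ (ρ : ℂ)) (MvPolynomial.X 0 + MvPolynomial.C I * MvPolynomial.X 1)
        (MvPolynomial.X 0 - MvPolynomial.C I * MvPolynomial.X 1) m n *
      hermJ (algebraMap ℂ _ (ρ : ℂ)) (MvPolynomial.X 0 + MvPolynomial.C I * MvPolynomial.X 1)
        (MvPolynomial.X 0 - MvPolynomial.C I * MvPolynomial.X 1) q p) =
      if m = p ∧ n = q then (m.factorial : ℂ) * n.factorial * (ρ : ℂ) ^ (m + n) else 0 := by
  have hv : (ρ / 2).toNNReal ≠ 0 := by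
    simp; linarith
  have hvc : (((ρ / 2).toNNReal : ℝ) : ℂ) = (ρ : ℂ) / 2 := by
    rw [Real.coe_toNNReal _ (by linarith)]; simp
  have st := gaussE_stein hv
  rw [hvc] at st
  have hI : (MvPolynomial.C I : MvPolynomial (Fin 2) ℂ) * MvPolynomial.C I = -1 := by
    rw [← MvPolynomial.C_mul, I_mul_I]; simp
  have h10 : MvPolynomial.pderiv (0 : Fin 2) (MvPolynomial.X 1 : MvPolynomial (Fin 2) ℂ) = 0 :=
    MvPolynomial.pderiv_X_of_ne (by decide)
  have h01 : MvPolynomial.pderiv (1 : Fin 2) (MvPolynomial.X 0 : MvPolynomial (Fin 2) ℂ) = 0 :=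
    MvPolynomial.pderiv_X_of_ne (by decide)
  have half : (1 / 2 : ℂ) • (2 : MvPolynomial (Fin 2) ℂ) = 1 := by
    rw [MvPolynomial.smul_eq_C_mul, show (2 : MvPolynomial (Fin 2) ℂ) = MvPolynomial.C 2 from (map_ofNat MvPolynomial.C 2).symm,
      ← MvPolynomial.C_mul]
    norm_num
  refine herm_orth (gaussE _)
    ((1 / 2 : ℂ) • (MvPolynomial.pderiv 0 + I • MvPolynomial.pderiv 1))
    ((1 / 2 : ℂ) • (MvPolynomial.pderiv 0 - I • MvPolynomial.pderiv 1)) (ρ : ℂ) _ _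
    ?_ ?_ ?_ ?_ ?_ ?_ ?_ m n p q
  · simp [h10, h01, MvPolynomial.smul_eq_C_mul, hI]
  · rw [← half]
    simp [h10, h01, MvPolynomial.smul_eq_C_mul, hI]
    ring
  · rw [← half]
    simp [h10, h01, MvPolynomial.smul_eq_C_mul, hI]
    ring
  · simp [h10, h01, MvPolynomial.smul_eq_C_mul, hI]
  · have := gaussE_monomial (ρ / 2).toNNReal 0 1
    simpa using this
  · intro g
    rw [add_mul, map_add, st, mul_assoc, ← MvPolynomial.smul_eq_C_mul, map_smul, st]
    simp
    ring
  · intro g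
    rw [sub_mul, map_sub, st, mul_assoc, ← MvPolynomial.smul_eq_C_mul, map_smul, st]
    simp
    ring

lemma complexHermite_eq (m n : ℕ) (z : ℂ) (ρ : ℝ) :
    complexHermite m n z ρ = hermJ (ρ : ℂ) z (starRingEnd ℂ z) m n := by
  rw [hermJ_eq_sum _ _ _ m n _ le_rfl]; rfl

lemma complexHermite_conj (m n : ℕ) (z : ℂ) (ρ : ℝ) :
    starRingEnd ℂ (complexHermite m n z ρ) = hermJ (ρ : ℂ) z (starRingEnd ℂ z) n m := by
  rw [complexHermite_eq, hermJ_map, hermJ_symm]; simp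

lemma complexHermite_integral {Ω : Type*} [MeasurableSpace Ω] (P : Measure Ω)
    (Z : Ω → ℂ) (hZmeas : Measurable Z) (ρ : ℝ) (hρ : 0 < ρ)
    (hZ : Measure.map Z P = complexGaussian ρ) (m n p q : ℕ) :
    ∫ ω, complexHermite m n (Z ω) ρ * (starRingEnd ℂ) (complexHermite p q (Z ω) ρ) ∂P =
      if m = p ∧ n = q then (m.factorial : ℂ) * n.factorial * (ρ : ℂ) ^ (m + n) else 0 := by
  have hc : Continuous fun z : ℂ =>
      complexHermite m n z ρ * (starRingEnd ℂ) (complexHermite p q z ρ) := by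
    unfold complexHermite
    fun_prop
  rw [← integral_map (f := fun z => complexHermite m n z ρ *
    (starRingEnd ℂ) (complexHermite p q z ρ)) hZmeas.aemeasurable hc.aestronglyMeasurable, hZ,
    complexGaussian, integral_map (by fun_prop) hc.aestronglyMeasurable, ← gaussE_orth hρ]
  change _ = ∫ x, MvPolynomial.eval (evalPt x) _ ∂(gaussTwo _)
  refine integral_congr_ae (Filter.Eventually.of_forall fun x => ?_)
  beta_reduce
  rw [complexHermite_conj, complexHermite_eq, map_mul, hermJ_map, hermJ_map]
  simp [evalPt, mul_comm I, sub_eq_add_neg]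

/-- Orthogonality of complex Hermite polynomials: for a complex Gaussian variable `Z` with
parameter `ρ > 0`, `E[J_{m,n}(Z,ρ)·conj(J_{p,q}(Z,ρ))] = 0` unless `m = p` and `n = q`,
and `E[|J_{m,n}(Z,ρ)|²] = m!·n!·ρ^{m+n}`. -/
theorem complexHermite_orthogonality
    {Ω : Type*} [MeasurableSpace Ω] (P : Measure Ω) [IsProbabilityMeasure P]
    (Z : Ω → ℂ) (hZmeas : Measurable Z) (ρ : ℝ) (hρ : 0 < ρ)
    (hZ : Measure.map Z P = complexGaussian ρ) (m n p q : ℕ) :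
    (¬(m = p ∧ n = q) →
      ∫ ω, complexHermite m n (Z ω) ρ * (starRingEnd ℂ) (complexHermite p q (Z ω) ρ) ∂P = 0) ∧
    ∫ ω, complexHermite m n (Z ω) ρ * (starRingEnd ℂ) (complexHermite m n (Z ω) ρ) ∂P
      = (Nat.factorial m : ℂ) * (Nat.factorial n : ℂ) * (ρ : ℂ) ^ (m + n) := by
  have key := complexHermite_integral P Z hZmeas ρ hρ hZ m n
  refine ⟨fun h => ?_, ?_⟩
  · rw [key, if_neg h]
  · rw [key, if_pos ⟨rfl, rfl⟩]
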